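/- arXiv:2311.03077 — 7 statements merged into one kernel-verified Lean document; each statement's English description precedes it below -/
import Mathlib

section
/- Let R be a commutative ring, let n > 0, let f = tⁿ + a_{n−1}t^{n−1} + … + a₀ ∈ R[t] be a monic polynomial of degree n, and let g = b_m t^m + … + b₀ ∈ R[t] be an arbitrary polynomial of degree at most m. If f and g generate the unit ideal of R[t], then the resultant Res_{n,m}(f,g) ∈ R, defined as the determinant of the (n+m)×(n+m) Sylvester matrix of f and g, is a unit of R. -/
/-- The `(n+m) × (n+m)` Sylvester matrix of two polynomials `f` (with coefficient sequence
`a_n, …, a_0`) and `g` (with coefficient sequence `b_m, …, b_0`): the first `m` rows contain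
the shifted coefficient sequences of `f` and the last `n` rows the shifted coefficient
sequences of `g`. -/
def sylvesterMatrix {R : Type*} [CommRing R] (n m : ℕ) (f g : Polynomial R) :
    Matrix (Fin (n + m)) (Fin (n + m)) R :=
  Matrix.of fun i j =>
    if (i : ℕ) < m then
      (if (i : ℕ) ≤ (j : ℕ) ∧ (j : ℕ) ≤ (i : ℕ) + n then
        f.coeff (n - ((j : ℕ) - (i : ℕ))) else 0)
    else
      (if (i : ℕ) - m ≤ (j : ℕ) ∧ (j : ℕ) ≤ ((i : ℕ) - m) + m then
        g.coeff (m - ((j : ℕ) - ((i : ℕ) - m))) else 0)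

/-!
Numbering rows and columns from the last to the first turns `sylvesterMatrix n m f g` into the
transpose of Mathlib's Sylvester matrix, so the determinant is Mathlib's `resultant f g n m`.
For monic `f`, raising `m` above `g.natDegree` multiplies the resultant by a power of the leading
coefficient `1`, so `m` may be taken to be the degree of `g`. For a relation `u * f + v * g = 1`,
multiplicativity then gives `Res(f, v) * Res(f, g) = Res(f, v * g) = Res(f, 1) = 1`, since modulo
`f` the product `v * g` is `1`.
-/

section

open Polynomial Matrix

variable {R : Type*} [CommRing R]

theorem sylvesterMatrix_rev_castAdd (n m : ℕ) (f g : R[X]) (k : Fin n) (l : Fin (n + m)) :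
    sylvesterMatrix n m f g (Fin.castAdd m k).rev l.rev =
      if (l : ℕ) ∈ Set.Icc (k : ℕ) (k + m) then g.coeff (l - k) else 0 := by
  have hg_row : ¬ ((Fin.castAdd m k).rev : ℕ) < m := by
    simp only [Fin.val_rev, Fin.val_castAdd]
    omega
  rw [sylvesterMatrix, of_apply, if_neg hg_row]
  simp only [Fin.val_rev, Fin.val_castAdd, Set.mem_Icc]
  refine if_ctx_congr (by omega) (fun hl => ?_) fun _ => rfl
  congr 1
  omega

theorem sylvesterMatrix_rev_natAdd (n m : ℕ) (f g : R[X]) (k : Fin m) (l : Fin (n + m)) :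
    sylvesterMatrix n m f g (Fin.natAdd n k).rev l.rev =
      if (l : ℕ) ∈ Set.Icc (k : ℕ) (k + n) then f.coeff (l - k) else 0 := by
  have hf_row : ((Fin.natAdd n k).rev : ℕ) < m := by
    simp only [Fin.val_rev, Fin.val_natAdd]
    omega
  rw [sylvesterMatrix, of_apply, if_pos hf_row]
  simp only [Fin.val_rev, Fin.val_natAdd, Set.mem_Icc]
  refine if_ctx_congr (by omega) (fun hl => ?_) fun _ => rfl
  congr 1
  omega

theorem sylvesterMatrix_submatrix_revPerm (n m : ℕ) (f g : R[X]) :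
    (sylvesterMatrix n m f g).submatrix Fin.revPerm Fin.revPerm = (sylvester f g n m)ᵀ := by
  ext i j
  simp only [submatrix_apply, Fin.revPerm_apply, transpose_apply, sylvester, of_apply]
  induction i using Fin.addCases with
  | left k => rw [sylvesterMatrix_rev_castAdd, Fin.addCases_left]
  | right k => rw [sylvesterMatrix_rev_natAdd, Fin.addCases_right]

theorem det_sylvesterMatrix (n m : ℕ) (f g : R[X]) :
    (sylvesterMatrix n m f g).det = resultant f g n m := by
  rw [← det_submatrix_equiv_self Fin.revPerm, sylvesterMatrix_submatrix_revPerm, det_transpose,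
    resultant]

theorem resultant_of_monic_of_natDegree_le {m : ℕ} {f g : R[X]} (hf : f.Monic)
    (hg : g.natDegree ≤ m) : resultant f g f.natDegree m = resultant f g := by
  obtain ⟨k, rfl⟩ := Nat.exists_eq_add_of_le hg
  rw [resultant_add_right_deg _ _ _ _ _ le_rfl, hf.coeff_natDegree, one_pow, one_mul]

theorem isUnit_det_sylvesterMatrix_iff_isCoprime {m : ℕ} {f g : R[X]} (hf : f.Monic)
    (hg : g.natDegree ≤ m) :
    IsUnit (sylvesterMatrix f.natDegree m f g).det ↔ IsCoprime f g := by
  rw [det_sylvesterMatrix, resultant_of_monic_of_natDegree_le hf hg,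
    isUnit_resultant_iff_isCoprime hf]

end

/-- If `f` is monic of degree `n > 0` and `g` has degree at most `m`, and `f` and `g` generate
the unit ideal of `R[t]`, then the resultant `Res_{n,m}(f,g)`, i.e. the determinant of the
Sylvester matrix, is a unit of `R`. -/
theorem stmt3 (R : Type*) [CommRing R] (n m : ℕ) (hn : 0 < n)
    (f g : Polynomial R) (hf : f.Monic) (hfdeg : f.natDegree = n)
    (hgdeg : g.natDegree ≤ m) (hcop : IsCoprime f g) :
    IsUnit (sylvesterMatrix n m f g).det := by
  subst hfdeg
  exact (isUnit_det_sylvesterMatrix_iff_isCoprime hf hgdeg).2 hcop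
end

section
/- Let R be a commutative ring and I ⊆ R an ideal. The following are equivalent: (i) (R, I) is a henselian pair; (ii) I is contained in the Jacobson radical of R and for every monic polynomial of the form f(t) = tⁿ(t−1) + a_n tⁿ + … + a₁ t + a₀ with a₀,…,a_n ∈ I there exists α ∈ 1 + I with f(α) = 0; (iii) I is contained in the Jacobson radical of R and every N-polynomial over (R, I) has a root lying in I. -/
open Polynomial

/-!
Let `f` have constant coefficient `a₀ ∈ I` and linear coefficient `a₁` with inverse `u`. The
substitution `t = -a₀ u s` turns `f(t)` into `a₀ (1 - s + s² h(s))` with all coefficients of `h`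
in `I`. A unit `s` is a root of the second factor exactly when `s⁻¹` is a root of its reversal
`tᵐ⁺¹ (t - 1) + h*(t)`, where `m = deg h` and `h*` is the reversal of `h`; this is a polynomial as
in (ii), whose root in `1 + I` is a unit because `I` lies in the Jacobson radical.
-/

section

variable {R : Type*} [CommRing R] {I : Ideal R}

/-- Gabber polynomials over `(R, I)`: the polynomials in criterion (ii), that is, the perturbations
of `tⁿ (t - 1)` by a polynomial of degree at most `n` with coefficients in `I`. Only the values
`a 0, …, a n` of the coefficient sequence matter. -/
def IsGabberPolynomial (I : Ideal R) (f : R[X]) : Prop :=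
  ∃ (n : ℕ) (a : ℕ → R), (∀ i ≤ n, a i ∈ I) ∧
    X ^ n * (X - 1) + ∑ i ∈ Finset.range (n + 1), C (a i) * X ^ i = f

namespace IsGabberPolynomial

theorem of_coeff_mem {p : R[X]} {n : ℕ} (hdeg : p.natDegree ≤ n) (hp : ∀ i, p.coeff i ∈ I) :
    IsGabberPolynomial I (X ^ n * (X - 1) + p) :=
  ⟨n, p.coeff, fun i _ ↦ hp i, by rw [← p.as_sum_range_C_mul_X_pow' (Nat.lt_succ_of_le hdeg)]⟩

theorem monic {f : R[X]} (hf : IsGabberPolynomial I f) : f.Monic := by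
  obtain ⟨n, a, -, rfl⟩ := hf
  have hsum : (∑ i ∈ Finset.range (n + 1), C (a i) * X ^ i : R[X]).degree < (n + 1 : ℕ) := by
    simpa only [Fin.sum_univ_eq_sum_range (fun i ↦ C (a i) * X ^ i)] using
      degree_sum_fin_lt fun i : Fin (n + 1) ↦ a i
  have hpow : (X ^ n : R[X]).degree < (n + 1 : ℕ) :=
    (degree_X_pow_le n).trans_lt (by exact_mod_cast n.lt_succ_self)
  rw [mul_sub, mul_one, ← pow_succ, sub_add_eq_add_sub, add_sub_assoc]
  exact monic_X_pow_add ((degree_sub_le _ _).trans_lt (max_lt hsum hpow))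

theorem exists_map_mk_eq {f : R[X]} (hf : IsGabberPolynomial I f) :
    ∃ n : ℕ, f.map (Ideal.Quotient.mk I) = X ^ n * (X - 1) := by
  obtain ⟨n, a, ha, rfl⟩ := hf
  refine ⟨n, ?_⟩
  have hsum : (∑ i ∈ Finset.range (n + 1), C (a i) * X ^ i).map (Ideal.Quotient.mk I) = 0 := by
    rw [Polynomial.map_sum]
    refine Finset.sum_eq_zero fun i hi ↦ ?_
    rw [Polynomial.map_mul, map_C,
      Ideal.Quotient.eq_zero_iff_mem.2 (ha i (Finset.mem_range_succ_iff.1 hi)), C_0, zero_mul]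
  rw [Polynomial.map_add, hsum, add_zero, Polynomial.map_mul, Polynomial.map_pow,
    Polynomial.map_sub, map_X, Polynomial.map_one]

theorem eval_one_mem {f : R[X]} (hf : IsGabberPolynomial I f) : f.eval 1 ∈ I := by
  obtain ⟨n, hn⟩ := hf.exists_map_mk_eq
  rw [← Ideal.Quotient.eq_zero_iff_mem, ← eval_one_map, hn]
  simp

theorem mk_eval_one_derivative {f : R[X]} (hf : IsGabberPolynomial I f) :
    Ideal.Quotient.mk I (f.derivative.eval 1) = 1 := by
  obtain ⟨n, hn⟩ := hf.exists_map_mk_eq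
  rw [← eval_one_map, ← derivative_map, hn]
  simp

theorem exists_isRoot [HenselianRing R I] {f : R[X]} (hf : IsGabberPolynomial I f) :
    ∃ α : R, α - 1 ∈ I ∧ f.IsRoot α := by
  obtain ⟨α, hroot, hα⟩ := HenselianRing.is_henselian f hf.monic 1 hf.eval_one_mem
    (hf.mk_eval_one_derivative ▸ isUnit_one)
  exact ⟨α, hα, hroot⟩

end IsGabberPolynomial

theorem isRoot_one_sub_X_add_X_sq_mul_of_isRoot_reverse {h : R[X]} {α s : R} (hαs : α * s = 1)
    (hα : (X ^ (h.natDegree + 1) * (X - 1) + h.reverse).IsRoot α) :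
    (1 - X + X ^ 2 * h).IsRoot s := by
  have hreverse : h.reverse.eval α * s ^ h.natDegree = h.eval s :=
    let _ : Invertible s := ⟨α, hαs, mul_comm s α ▸ hαs⟩
    eval₂_reverse_mul_pow (RingHom.id R) s h
  have hpow : α ^ (h.natDegree + 1) * s ^ (h.natDegree + 1) = 1 := by
    rw [← mul_pow, hαs, one_pow]
  simp only [IsRoot.def, eval_add, eval_mul, eval_pow, eval_X, eval_sub, eval_one] at hα ⊢
  linear_combination s ^ (h.natDegree + 2) * hα - s ^ 2 * hreverse - s * (α - 1) * hpow - hαs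

theorem exists_isRoot_one_sub_X_add_X_sq_mul (hI : I ≤ (⊥ : Ideal R).jacobson)
    (hGabber : ∀ f : R[X], IsGabberPolynomial I f → ∃ α : R, α - 1 ∈ I ∧ f.IsRoot α)
    {h : R[X]} (hh : ∀ i, h.coeff i ∈ I) :
    ∃ s : R, (1 - X + X ^ 2 * h).IsRoot s := by
  have hreverse : IsGabberPolynomial I (X ^ (h.natDegree + 1) * (X - 1) + h.reverse) :=
    .of_coeff_mem (h.reverse_natDegree_le.trans h.natDegree.le_succ) fun i ↦ by
      rw [coeff_reverse]
      exact hh _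
  obtain ⟨α, hα, hroot⟩ := hGabber _ hreverse
  have hunit : IsUnit α := Ideal.isUnit_of_sub_one_mem_jacobson_bot α (hI hα)
  obtain ⟨s, hαs⟩ := hunit.exists_right_inv
  exact ⟨s, isRoot_one_sub_X_add_X_sq_mul_of_isRoot_reverse hαs hroot⟩

theorem eval_neg_coeff_zero_mul_eq (f : R[X]) {u : R} (hu : f.coeff 1 * u = 1) (s : R) :
    f.eval (-(f.coeff 0 * u) * s) = f.coeff 0 *
      (1 - X + X ^ 2 * (C (f.coeff 0 * u ^ 2) *
        f.divX.divX.comp (C (-(f.coeff 0 * u)) * X))).eval s := by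
  have hf : f = C (f.coeff 0) + C (f.coeff 1) * X + X ^ 2 * f.divX.divX := by
    conv_lhs => rw [← X_mul_divX_add f, ← X_mul_divX_add f.divX, coeff_divX]
    ring
  have heval (t : R) :
      f.eval t = f.coeff 0 + f.coeff 1 * t + t ^ 2 * f.divX.divX.eval t := by
    conv_lhs => rw [hf]
    simp only [eval_add, eval_mul, eval_pow, eval_X, eval_C]
  rw [heval]
  simp only [eval_add, eval_sub, eval_mul, eval_pow, eval_comp, eval_one, eval_X, eval_C]
  linear_combination -(f.coeff 0 * s) * hu

theorem exists_mem_isRoot_of_isUnit_coeff_one (hI : I ≤ (⊥ : Ideal R).jacobson)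
    (hGabber : ∀ f : R[X], IsGabberPolynomial I f → ∃ α : R, α - 1 ∈ I ∧ f.IsRoot α)
    {f : R[X]} (h₀ : f.coeff 0 ∈ I) (h₁ : IsUnit (f.coeff 1)) :
    ∃ α ∈ I, f.IsRoot α := by
  obtain ⟨u, hu⟩ := h₁.exists_right_inv
  obtain ⟨s, hs⟩ := exists_isRoot_one_sub_X_add_X_sq_mul hI hGabber
    (h := C (f.coeff 0 * u ^ 2) * f.divX.divX.comp (C (-(f.coeff 0 * u)) * X)) fun i ↦ by
      rw [coeff_C_mul]
      exact I.mul_mem_right _ (I.mul_mem_right _ h₀)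
  refine ⟨-(f.coeff 0 * u) * s, I.mul_mem_right _ (I.neg_mem (I.mul_mem_right _ h₀)), ?_⟩
  rw [IsRoot.def, eval_neg_coeff_zero_mul_eq f hu, hs.eq_zero, mul_zero]

theorem henselianRing_of_forall_exists_mem_isRoot (hI : I ≤ (⊥ : Ideal R).jacobson)
    (hroot : ∀ f : R[X], f.Monic → f.coeff 0 ∈ I →
      IsUnit (Ideal.Quotient.mk I (f.coeff 1)) → ∃ α ∈ I, f.IsRoot α) :
    HenselianRing R I where
  jac := hI
  is_henselian f hf a ha hda := by
    obtain ⟨b, hb, hbroot⟩ := hroot (taylor a f) ((leadingCoeff_taylor a f).trans hf)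
      (by rwa [taylor_coeff_zero]) (by rwa [taylor_coeff_one])
    rw [IsRoot.def, taylor_eval] at hbroot
    exact ⟨b + a, hbroot, by rwa [add_sub_cancel_right]⟩

end

/-- Characterizations of henselian pairs: `(R, I)` is a henselian pair iff `I` is contained in
the Jacobson radical and every monic polynomial of the form `tⁿ(t−1) + aₙtⁿ + … + a₁t + a₀`
with all `aᵢ ∈ I` has a root in `1 + I`, iff `I` is contained in the Jacobson radical and every
N-polynomial over `(R, I)` (a monic polynomial with constant coefficient in `I` and degree-one
coefficient a unit modulo `I`) has a root in `I`. -/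
theorem stmt4 (R : Type*) [CommRing R] (I : Ideal R) :
    List.TFAE [
      HenselianRing R I,
      I ≤ (⊥ : Ideal R).jacobson ∧ ∀ (n : ℕ) (a : ℕ → R), (∀ i ≤ n, a i ∈ I) →
        ∃ α : R, α - 1 ∈ I ∧
          (X ^ n * (X - 1) + ∑ i ∈ Finset.range (n + 1), C (a i) * X ^ i).IsRoot α,
      I ≤ (⊥ : Ideal R).jacobson ∧ ∀ f : Polynomial R, f.Monic → f.coeff 0 ∈ I →
        IsUnit (Ideal.Quotient.mk I (f.coeff 1)) → ∃ α ∈ I, f.IsRoot α ] := by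
  tfae_have 1 → 2 := fun _ ↦
    ⟨HenselianRing.jac, fun n a ha ↦ IsGabberPolynomial.exists_isRoot ⟨n, a, ha, rfl⟩⟩
  tfae_have 2 → 3 := by
    rintro ⟨hI, hGabber⟩
    refine ⟨hI, fun f _ h₀ h₁ ↦ exists_mem_isRoot_of_isUnit_coeff_one hI ?_ h₀ ?_⟩
    · rintro _ ⟨n, a, ha, rfl⟩
      exact hGabber n a ha
    · have := isLocalHom_of_le_jacobson_bot I hI
      exact h₁.of_map
  tfae_have 3 → 1 := fun ⟨hI, hroot⟩ ↦ henselianRing_of_forall_exists_mem_isRoot hI hroot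
  tfae_finish
end

section
/- Let φ : A → B be a homomorphism of commutative rings and let f, g ∈ A. (1) If the induced maps A/f → B/φ(f) and A/g → B/φ(g) are surjective, then the induced map A/fg → B/φ(fg) is surjective. (2) Let S ⊆ A be a multiplicatively closed set containing f and g, let I = ker(λ_S : A → A_S) and J = ker(λ_{φ(S)} : B → B_{φ(S)}); if φ restricts to a bijection I → J and the induced maps A/f → B/φ(f) and A/g → B/φ(g) are injective, then the induced map A/fg → B/φ(fg) is injective. -/
/-- For a ring homomorphism `φ : A → B` and `f ∈ A`, the induced homomorphism
`A/(f) → B/(φ f)` on quotients. -/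
def inducedQuotMap {A B : Type*} [CommRing A] [CommRing B] (φ : A →+* B) (f : A) :
    A ⧸ Ideal.span {f} →+* B ⧸ Ideal.span {φ f} :=
  Ideal.quotientMap (Ideal.span {φ f}) φ
    (by rw [← Ideal.map_le_iff_le_comap, Ideal.map_span, Set.image_singleton])

/-!
An element of `φ f * B` has the form `φ f * b₁`, so approximating `b₁` modulo `φ g` refines an
approximation modulo `φ f` to one modulo `φ (f * g)`; this gives surjectivity.

For injectivity, suppose `φ (f * g)` divides `φ a`. Then `a = f * c`, and cancelling `φ f` shows
that `φ g` divides `φ c` up to an element `y` killed by `φ f`. If `y = φ i` with `f * i = 0`, then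
replacing `c` by `c - i` leaves `f * c` unchanged and removes the error `y`, so `g` divides
`c - i`. Such an `i` exists because `y` becomes zero after inverting `φ f`: it is the image of some
`i` in the kernel of `A → A_S`, and `f * i = 0` because `φ` is injective on that kernel.
-/

section InducedQuotMap

variable {A B : Type*} [CommRing A] [CommRing B] {φ : A →+* B} {f g : A}

theorem inducedQuotMap_surjective_iff :
    Function.Surjective (inducedQuotMap φ f) ↔ ∀ b, ∃ a, φ f ∣ b - φ a := by
  simp only [Function.Surjective, Ideal.Quotient.mk_surjective.forall,
    Ideal.Quotient.mk_surjective.exists, inducedQuotMap, Ideal.quotientMap_mk,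
    Ideal.Quotient.eq, Ideal.mem_span_singleton]
  exact forall_congr' fun b => exists_congr fun a => dvd_sub_comm

theorem inducedQuotMap_injective_iff :
    Function.Injective (inducedQuotMap φ f) ↔ ∀ a, φ f ∣ φ a → f ∣ a := by
  simp only [injective_iff_map_eq_zero, Ideal.Quotient.mk_surjective.forall, inducedQuotMap,
    Ideal.quotientMap_mk, Ideal.Quotient.eq_zero_iff_dvd]

theorem inducedQuotMap_mul_surjective (hf : Function.Surjective (inducedQuotMap φ f))
    (hg : Function.Surjective (inducedQuotMap φ g)) :
    Function.Surjective (inducedQuotMap φ (f * g)) := by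
  rw [inducedQuotMap_surjective_iff] at hf hg ⊢
  intro b
  obtain ⟨a, b₁, hb₁⟩ := hf b
  obtain ⟨a₁, b₂, hb₂⟩ := hg b₁
  refine ⟨a + f * a₁, b₂, ?_⟩
  simp only [map_add, map_mul]
  linear_combination hb₁ + φ f * hb₂

theorem inducedQuotMap_mul_injective
    (hφ : Set.SurjOn φ (Submodule.torsionBy A A f) (Submodule.torsionBy B B (φ f)))
    (hf : Function.Injective (inducedQuotMap φ f))
    (hg : Function.Injective (inducedQuotMap φ g)) :
    Function.Injective (inducedQuotMap φ (f * g)) := by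
  rw [inducedQuotMap_injective_iff] at hf hg ⊢
  rintro a ⟨b, hb⟩
  rw [map_mul] at hb
  obtain ⟨c, rfl⟩ : f ∣ a := hf a ⟨φ g * b, by rw [hb, mul_assoc]⟩
  rw [map_mul] at hb
  have h_tors : φ c - φ g * b ∈ Submodule.torsionBy B B (φ f) := by
    rw [Submodule.mem_torsionBy_iff, smul_eq_mul]
    linear_combination hb
  obtain ⟨i, hi, hφi⟩ := hφ h_tors
  have hfi : f * i = 0 := hi
  have hdvd : g ∣ c - i := hg (c - i) ⟨b, by rw [map_sub, hφi, sub_sub_cancel]⟩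
  have hfc : f * c = f * (c - i) := by rw [mul_sub, hfi, sub_zero]
  rw [hfc]
  exact mul_dvd_mul_left f hdvd

end InducedQuotMap

theorem torsionBy_le_ker_algebraMap {A : Type*} (A' : Type*) [CommRing A] [CommRing A']
    [Algebra A A'] (S : Submonoid A) [IsLocalization S A'] {s : A} (hs : s ∈ S) :
    Submodule.torsionBy A A s ≤ RingHom.ker (algebraMap A A') := fun _ ha =>
  (IsLocalization.map_eq_zero_iff S A' _).2 ⟨⟨s, hs⟩, ha⟩

theorem surjOn_torsionBy_of_injOn_of_surjOn {A B : Type*} [CommRing A] [CommRing B]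
    {φ : A →+* B} {f : A} {I : Ideal A} {J : Ideal B} (h_inj : Set.InjOn φ I)
    (h_surj : Set.SurjOn φ I J) (hJ : Submodule.torsionBy B B (φ f) ≤ J) :
    Set.SurjOn φ (Submodule.torsionBy A A f) (Submodule.torsionBy B B (φ f)) := by
  intro y hy
  obtain ⟨i, hi, rfl⟩ := h_surj (hJ hy)
  have hφ : φ (f * i) = φ 0 := by
    rw [map_mul, map_zero]
    exact hy
  exact ⟨i, h_inj (I.mul_mem_left f hi) I.zero_mem hφ, rfl⟩

theorem stmt6_general {A B : Type*} [CommRing A] [CommRing B] (φ : A →+* B) (f g : A) :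
    (Function.Surjective (inducedQuotMap φ f) → Function.Surjective (inducedQuotMap φ g) →
      Function.Surjective (inducedQuotMap φ (f * g))) ∧
    (Set.SurjOn φ (Submodule.torsionBy A A f) (Submodule.torsionBy B B (φ f)) →
      Function.Injective (inducedQuotMap φ f) → Function.Injective (inducedQuotMap φ g) →
      Function.Injective (inducedQuotMap φ (f * g))) :=
  ⟨inducedQuotMap_mul_surjective, inducedQuotMap_mul_injective⟩

/-- (1) If the induced maps `A/f → B/φ(f)` and `A/g → B/φ(g)` are surjective, then so is
`A/fg → B/φ(fg)`.  (2) If `φ` restricts to a bijection between the kernels of the localization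
maps `A → A_S` and `B → B_{φ(S)}` for a multiplicative set `S` containing `f` and `g`, and the
induced maps `A/f → B/φ(f)` and `A/g → B/φ(g)` are injective, then `A/fg → B/φ(fg)` is
injective. -/
theorem stmt6 {A B : Type*} [CommRing A] [CommRing B] (φ : A →+* B) (f g : A) :
    (Function.Surjective (inducedQuotMap φ f) → Function.Surjective (inducedQuotMap φ g) →
      Function.Surjective (inducedQuotMap φ (f * g))) ∧
    (∀ S : Submonoid A, f ∈ S → g ∈ S →
      Set.BijOn (⇑φ) (RingHom.ker (algebraMap A (Localization S)) : Set A)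
        (RingHom.ker (algebraMap B (Localization (S.map φ))) : Set B) →
      Function.Injective (inducedQuotMap φ f) → Function.Injective (inducedQuotMap φ g) →
      Function.Injective (inducedQuotMap φ (f * g))) := by
  refine ⟨(stmt6_general φ f g).1, fun S hf _ h => (stmt6_general φ f g).2 ?_⟩
  exact surjOn_torsionBy_of_injOn_of_surjOn h.injOn h.surjOn
    (torsionBy_le_ker_algebraMap _ (S.map φ) (S.mem_map_of_mem φ hf))
end

section
/- Let φ : A → B be a homomorphism of commutative rings, let u, v ∈ A and set s = uv. If the induced map A/s → B/φ(s) is an isomorphism, then the induced maps A/u → B/φ(u) and A/v → B/φ(v) are isomorphisms as well. -/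
section

open Function

variable {A B : Type*} [Ring A] [Ring B] {φ : A →+* B} {I K : Ideal A} {J L : Ideal B}
  [J.IsTwoSided]

theorem comap_map_eq_sup_comap_of_surjective_mk_comp
    (hφ : Surjective ((Ideal.Quotient.mk J).comp φ)) (hJ : J ≤ K.map φ) :
    (K.map φ).comap φ = K ⊔ J.comap φ :=
  calc
    (K.map φ).comap φ
      = (((K.map φ).map (Ideal.Quotient.mk J)).comap (Ideal.Quotient.mk J)).comap φ := by
        rw [Ideal.comap_map_quotientMk, sup_eq_right.2 hJ]
    _ = (K.map ((Ideal.Quotient.mk J).comp φ)).comap ((Ideal.Quotient.mk J).comp φ) := by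
        rw [Ideal.map_map, Ideal.comap_comap]
    _ = K ⊔ RingHom.ker ((Ideal.Quotient.mk J).comp φ) := Ideal.comap_map_of_surjective' _ hφ K
    _ = K ⊔ J.comap φ := by rw [← RingHom.comap_ker, Ideal.mk_ker]

theorem surjective_mk_comp_of_le [L.IsTwoSided] (hJL : J ≤ L)
    (hφ : Surjective ((Ideal.Quotient.mk J).comp φ)) :
    Surjective ((Ideal.Quotient.mk L).comp φ) := by
  rw [← Ideal.Quotient.factor_comp_mk hJL, RingHom.comp_assoc]
  exact (Ideal.Quotient.factor_surjective hJL).comp hφ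

variable [I.IsTwoSided]

theorem quotientMap_injective_iff_comap_eq (h : I ≤ J.comap φ) :
    Injective (Ideal.quotientMap J φ h) ↔ J.comap φ = I := by
  rw [Ideal.quotientMap, Ideal.injective_lift_iff, ← RingHom.comap_ker, Ideal.mk_ker]

theorem quotientMap_surjective_iff_surjective_mk_comp (h : I ≤ J.comap φ) :
    Surjective (Ideal.quotientMap J φ h) ↔ Surjective ((Ideal.Quotient.mk J).comp φ) := by
  rw [← Ideal.quotientMap_comp_mk h, RingHom.coe_comp, Ideal.Quotient.mk_surjective.of_comp_iff]

theorem stmt8_general [K.IsTwoSided] [L.IsTwoSided] {hIJ : I ≤ J.comap φ}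
    (hKL : K ≤ L.comap φ) (hLK : L ≤ K.map φ) (hIK : I ≤ K) (hJL : J ≤ L)
    (h : Bijective (Ideal.quotientMap J φ hIJ)) : Bijective (Ideal.quotientMap L φ hKL) := by
  have hJ : J.comap φ = I := (quotientMap_injective_iff_comap_eq hIJ).1 h.injective
  have hφ : Surjective ((Ideal.Quotient.mk J).comp φ) :=
    (quotientMap_surjective_iff_surjective_mk_comp hIJ).1 h.surjective
  have hL : L = K.map φ := hLK.antisymm (Ideal.map_le_iff_le_comap.2 hKL)
  constructor
  · rw [quotientMap_injective_iff_comap_eq, hL,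
      comap_map_eq_sup_comap_of_surjective_mk_comp hφ (hJL.trans hLK), hJ, sup_eq_left.2 hIK]
  · exact (quotientMap_surjective_iff_surjective_mk_comp hKL).2 (surjective_mk_comp_of_le hJL hφ)

end

theorem inducedQuotMap_bijective_of_dvd {A B : Type*} [CommRing A] [CommRing B] {φ : A →+* B}
    {f s : A} (hfs : f ∣ s) (h : Function.Bijective (inducedQuotMap φ s)) :
    Function.Bijective (inducedQuotMap φ f) :=
  stmt8_general _ (by rw [Ideal.map_span, Set.image_singleton])
    (Ideal.span_singleton_le_span_singleton.2 hfs)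
    (Ideal.span_singleton_le_span_singleton.2 (map_dvd φ hfs)) h

/-- If the induced map `A/uv → B/φ(uv)` is an isomorphism, then so are the induced maps
`A/u → B/φ(u)` and `A/v → B/φ(v)`. -/
theorem stmt8 {A B : Type*} [CommRing A] [CommRing B] (φ : A →+* B) (u v : A)
    (h : Function.Bijective (inducedQuotMap φ (u * v))) :
    Function.Bijective (inducedQuotMap φ u) ∧ Function.Bijective (inducedQuotMap φ v) :=
  ⟨inducedQuotMap_bijective_of_dvd (dvd_mul_right u v) h,
    inducedQuotMap_bijective_of_dvd (dvd_mul_left v u) h⟩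
end

section
/- Let R be a commutative ring, I ⊆ R an ideal, and let f(t) = a₀ + a₁t + … + a_n tⁿ ∈ R[t] be a polynomial with a₀ ∈ I and a₁ a unit of R, and let g(t) ∈ R[t] satisfy g(0) = 1. Let R′ := (R[t]/f)_g be the localization of R[t]/(f) at the image of g, and assume that the images in R′ of the formal derivative f′(t) and of the unique polynomial f̃(t) with f(t) − a₀ = t·f̃(t) are units of R′. Then for every k ≥ 1 the induced ring homomorphism R/Iᵏ → R′/IᵏR′ is an isomorphism. -/
/-!
Modulo `J := Iᵏ` the constant coefficient of `f` is nilpotent and its linear coefficient is a unit,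
so by Newton iteration `f` has exactly one nilpotent root `α` in `R/J`. As `g(α)` differs from
`g(0) = 1` by a nilpotent, it is a unit, and `t ↦ α` defines a homomorphism `R′ → R/J` over `R`.
It induces an inverse of `R/J → R′/JR′` as soon as `t` and `α` agree in `R′/JR′`. Both are roots
of `f` there, and `t` is nilpotent because `t · f̃(t) = -a₀` with `f̃(t)` a unit; so they agree by
uniqueness of the nilpotent root.
-/

/-- The ring `R′ = (R[t]/f)_g`: the localization of `R[t]/(f)` at (the image of) `g`. -/
abbrev LHomRing (R : Type*) [CommRing R] (f g : Polynomial R) : Type _ :=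
  Localization.Away (Ideal.Quotient.mk (Ideal.span {f}) g)

/-- The canonical homomorphism `R[t] → R′ = (R[t]/f)_g`. -/
noncomputable def lhomPoly (R : Type*) [CommRing R] (f g : Polynomial R) :
    Polynomial R →+* LHomRing R f g :=
  (algebraMap (Polynomial R ⧸ Ideal.span {f}) (LHomRing R f g)).comp
    (Ideal.Quotient.mk (Ideal.span {f}))

/-- The structural homomorphism `R → R′ = (R[t]/f)_g`. -/
noncomputable def lhomBase (R : Type*) [CommRing R] (f g : Polynomial R) :
    R →+* LHomRing R f g :=
  (lhomPoly R f g).comp Polynomial.C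

open Polynomial

section NilpotentRoot

variable {R S : Type*} [Semiring R] [CommRing S] (q : R →+* S) (f : R[X])

theorem existsUnique_isNilpotent_and_eval₂_eq_zero (h0 : IsNilpotent (q (f.coeff 0)))
    (h1 : IsUnit (q (f.coeff 1))) : ∃! s, IsNilpotent s ∧ f.eval₂ q s = 0 := by
  have hval : IsNilpotent (aeval (0 : S) (f.map q)) := by
    rwa [← coeff_zero_eq_aeval_zero, coeff_map]
  have hder : IsUnit (aeval (0 : S) (derivative (f.map q))) := by
    simpa only [← coeff_zero_eq_aeval_zero, coeff_derivative, coeff_map, zero_add, Nat.cast_zero,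
      mul_one] using h1
  simpa only [zero_sub, isNilpotent_neg_iff, coe_aeval_eq_eval, eval_map] using
    existsUnique_nilpotent_sub_and_aeval_eq_zero hval hder

variable {q f}

theorem isUnit_eval₂_of_isNilpotent {s : S} (hf : IsUnit (q (f.eval 0))) (hs : IsNilpotent s) :
    IsUnit (f.eval₂ q s) := by
  have hzero : IsUnit (aeval (0 : S) (f.map q)) := by
    rwa [← coeff_zero_eq_aeval_zero, coeff_map, coeff_zero_eq_eval_zero]
  simpa only [coe_aeval_eq_eval, eval_map] using
    isUnit_aeval_of_isUnit_aeval_of_isNilpotent_sub hzero (by rwa [sub_zero])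

theorem isNilpotent_of_eval₂_eq_zero_of_isUnit_divX {s : S} (hs : f.eval₂ q s = 0)
    (h0 : IsNilpotent (q (f.coeff 0))) (hdivX : IsUnit (f.divX.eval₂ q s)) : IsNilpotent s := by
  have hmul : f.divX.eval₂ q s * s = -q (f.coeff 0) := by
    rw [eq_neg_iff_add_eq_zero, ← eval₂_mul_X, ← eval₂_C q s, ← eval₂_add, divX_mul_X_add, hs]
  rw [← hdivX.isNilpotent_unit_mul_of_commute_iff (Commute.all _ _), hmul]
  exact h0.neg

end NilpotentRoot

namespace LHomRing

variable {R S : Type*} [CommRing R] [CommRing S] {f g : R[X]}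

theorem lhomPoly_self : lhomPoly R f g f = 0 := by
  rw [lhomPoly, RingHom.comp_apply, Ideal.Quotient.mk_singleton_self, map_zero]

theorem eval₂_lhomPoly_X (h : LHomRing R f g →+* S) (p : R[X]) :
    p.eval₂ (h.comp (lhomBase R f g)) (h (lhomPoly R f g X)) = h (lhomPoly R f g p) := by
  rw [lhomBase, ← RingHom.comp_assoc, ← RingHom.comp_apply h, ← hom_eval₂, eval₂_C_X,
    RingHom.comp_apply]

theorem hom_ext {h₁ h₂ : LHomRing R f g →+* S}
    (hbase : h₁.comp (lhomBase R f g) = h₂.comp (lhomBase R f g))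
    (hX : h₁ (lhomPoly R f g X) = h₂ (lhomPoly R f g X)) : h₁ = h₂ := by
  apply IsLocalization.ringHom_ext (Submonoid.powers (Ideal.Quotient.mk (Ideal.span {f}) g))
  apply Ideal.Quotient.ringHom_ext
  exact Polynomial.ringHom_ext (RingHom.congr_fun hbase) hX

/-- The homomorphism `(R[t]/f)_g → S` extending `q : R → S` and sending `t` to a root `s` of `f`
at which `g` is invertible: the universal property of `(R[t]/f)_g`. -/
noncomputable def lift (q : R →+* S) (s : S) (hf : f.eval₂ q s = 0) (hg : IsUnit (g.eval₂ q s)) :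
    LHomRing R f g →+* S :=
  IsLocalization.Away.lift (Ideal.Quotient.mk (Ideal.span {f}) g)
    (g := Ideal.Quotient.lift (Ideal.span {f}) (eval₂RingHom q s) fun _ hp ↦
      (Ideal.span_singleton_le_iff_mem (RingHom.ker (eval₂RingHom q s))).mpr hf hp) hg

section Lift

variable (q : R →+* S) (s : S) (hf : f.eval₂ q s = 0) (hg : IsUnit (g.eval₂ q s))

theorem lift_lhomPoly (p : R[X]) : lift q s hf hg (lhomPoly R f g p) = p.eval₂ q s :=
  IsLocalization.Away.lift_eq _ _ _

theorem lift_comp_lhomBase : (lift q s hf hg).comp (lhomBase R f g) = q :=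
  RingHom.ext fun r ↦ (lift_lhomPoly q s hf hg (C r)).trans (eval₂_C q s)

end Lift

end LHomRing

theorem quotientMap_map_bijective_of_retraction {R S : Type*} [CommRing R] [CommRing S]
    {b : R →+* S} {J : Ideal R} (φ : S →+* R ⧸ J) (hφ : φ.comp b = Ideal.Quotient.mk J)
    (hmk : (Ideal.quotientMap (J.map b) b Ideal.le_comap_map).comp φ =
      Ideal.Quotient.mk (J.map b)) :
    Function.Bijective (Ideal.quotientMap (J.map b) b Ideal.le_comap_map) := by
  constructor
  · have hker : J.map b ≤ RingHom.ker φ := by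
      rw [Ideal.map_le_iff_le_comap, RingHom.comap_ker, hφ, Ideal.mk_ker]
    refine Ideal.quotientMap_injective' fun r hr ↦ ?_
    rw [← Ideal.mk_ker (I := J), ← hφ]
    exact hker hr
  · refine Function.Surjective.of_comp (g := φ) ?_
    rw [← RingHom.coe_comp, hmk]
    exact Ideal.Quotient.mk_surjective

theorem stmt9_general (R : Type*) [CommRing R] (J : Ideal R) (f g : R[X])
    (ha0 : IsNilpotent (Ideal.Quotient.mk J (f.coeff 0)))
    (ha1 : IsUnit (Ideal.Quotient.mk J (f.coeff 1)))
    (hg : IsUnit (Ideal.Quotient.mk J (g.eval 0)))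
    (hdivX : IsUnit (Ideal.Quotient.mk (J.map (lhomBase R f g)) (lhomPoly R f g f.divX))) :
    Function.Bijective
      (Ideal.quotientMap (J.map (lhomBase R f g)) (lhomBase R f g) Ideal.le_comap_map) := by
  set π := Ideal.Quotient.mk J
  set ρ := Ideal.Quotient.mk (J.map (lhomBase R f g))
  set Φ := Ideal.quotientMap (J.map (lhomBase R f g)) (lhomBase R f g) Ideal.le_comap_map
  have hΦ : Φ.comp π = ρ.comp (lhomBase R f g) := Ideal.quotientMap_comp_mk Ideal.le_comap_map
  obtain ⟨α, ⟨hα, hfα⟩, -⟩ := existsUnique_isNilpotent_and_eval₂_eq_zero π f ha0 ha1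
  let φ := LHomRing.lift π α hfα (isUnit_eval₂_of_isNilpotent hg hα)
  have hφ : φ.comp (lhomBase R f g) = π := LHomRing.lift_comp_lhomBase ..
  have ha0' : IsNilpotent (Φ.comp π (f.coeff 0)) := ha0.map Φ
  have hfX : f.eval₂ (Φ.comp π) (ρ (lhomPoly R f g X)) = 0 := by
    rw [hΦ, LHomRing.eval₂_lhomPoly_X, LHomRing.lhomPoly_self, map_zero]
  have hX : IsNilpotent (ρ (lhomPoly R f g X)) :=
    isNilpotent_of_eval₂_eq_zero_of_isUnit_divX hfX ha0'
      (by rwa [hΦ, LHomRing.eval₂_lhomPoly_X])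
  have hfΦα : f.eval₂ (Φ.comp π) (Φ α) = 0 := by rw [← hom_eval₂, hfα, map_zero]
  have hΦα : Φ α = ρ (lhomPoly R f g X) :=
    (existsUnique_isNilpotent_and_eval₂_eq_zero (Φ.comp π) f ha0' (ha1.map Φ)).unique
      ⟨hα.map Φ, hfΦα⟩ ⟨hX, hfX⟩
  refine quotientMap_map_bijective_of_retraction φ hφ (LHomRing.hom_ext ?_ ?_)
  · rw [RingHom.comp_assoc, hφ, hΦ]
  · rw [RingHom.comp_apply, LHomRing.lift_lhomPoly, eval₂_X, hΦα]

/-- For an L-homomorphism `R → R′ = (R[t]/f)_g` along an ideal `I` (so `f` has constant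
coefficient in `I`, degree-one coefficient a unit, `g(0) = 1`, and both `f′` and the polynomial
`f̃` with `f − f(0) = t·f̃` become units in `R′`), the induced map `R/Iᵏ → R′/IᵏR′` is an
isomorphism for every `k ≥ 1`. -/
theorem stmt9 (R : Type*) [CommRing R] (I : Ideal R) (f g : Polynomial R)
    (ha0 : f.coeff 0 ∈ I) (ha1 : IsUnit (f.coeff 1)) (hg : g.eval 0 = 1)
    (hder : IsUnit (lhomPoly R f g (Polynomial.derivative f)))
    (hdivX : IsUnit (lhomPoly R f g f.divX))
    (k : ℕ) (hk : 1 ≤ k) :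
    Function.Bijective
      (Ideal.quotientMap ((I ^ k).map (lhomBase R f g)) (lhomBase R f g)
        Ideal.le_comap_map) :=
  stmt9_general R (I ^ k) f g ⟨k, Ideal.Quotient.eq_zero_iff_mem.mpr (Ideal.pow_mem_pow ha0 k)⟩
    (ha1.map _) (by simp [hg]) (hdivX.map _)
end

section
/- Let A be a commutative ring with Jacobson radical J, let f(x) = xⁿ + a_{n−1}x^{n−1} + … + a₁x + a₀ ∈ A[x] be a monic polynomial all of whose coefficients a₀,…,a_{n−1} lie in J, and let g ∈ 1 + xA[x] (i.e. g has constant coefficient 1). Then f and g generate the unit ideal of A[x]. -/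
/-! For monic `f`, the polynomials `f` and `g` are coprime exactly when their resultant is a unit.
The formation of resultants commutes with reduction modulo the Jacobson radical `J` of `A`, and an
element of `A` is a unit as soon as its class in `A ⧸ J` is, so coprimality with a monic polynomial
may be checked modulo `J`. There `f` becomes a power of `X`, which is coprime to every polynomial
whose constant coefficient is a unit. -/

open Polynomial

section Resultant

variable {R S : Type*} [CommRing R] [CommRing S] {f : R[X]}

theorem resultant_map_of_monic (hf : f.Monic) (g : R[X]) (φ : R →+* S) :
    resultant (f.map φ) (g.map φ) = φ (resultant f g) := by
  nontriviality S
  -- The degree of `g` may drop under `φ`; as `f` is monic, this leaves the resultant unchanged.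
  obtain ⟨k, hk⟩ := Nat.exists_eq_add_of_le (natDegree_map_le (f := φ) (p := g))
  have hlead : (f.map φ).coeff f.natDegree = 1 := by
    rw [coeff_map, hf.coeff_natDegree, map_one]
  rw [← resultant_map_map, hk, resultant_add_right_deg _ _ _ _ _ le_rfl, hlead, one_pow, one_mul,
    hf.natDegree_map]

theorem isCoprime_map_iff_of_monic (hf : f.Monic) (g : R[X]) (φ : R →+* S) [IsLocalHom φ] :
    IsCoprime (f.map φ) (g.map φ) ↔ IsCoprime f g := by
  rw [← isUnit_resultant_iff_isCoprime (hf.map φ), ← isUnit_resultant_iff_isCoprime hf,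
    resultant_map_of_monic hf, isUnit_map_iff]

end Resultant

theorem isCoprime_X_left_iff {R : Type*} [CommRing R] {g : R[X]} :
    IsCoprime X g ↔ IsUnit (g.coeff 0) := by
  constructor
  · intro h
    simpa [isCoprime_zero_left] using h.map (constantCoeff (R := R))
  · intro h
    rw [← X_mul_divX_add g, IsCoprime.mul_add_left_right_iff]
    exact (isCoprime_zero_left.mpr (h.map C)).of_isCoprime_of_dvd_left (dvd_zero X)

theorem stmt10_general (A : Type*) [CommRing A] (f g : A[X]) (hf : f.Monic)
    (hcoeff : ∀ i < f.natDegree, f.coeff i ∈ (⊥ : Ideal A).jacobson)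
    (hg : IsUnit (g.coeff 0)) :
    IsCoprime f g := by
  let π := Ideal.Quotient.mk (⊥ : Ideal A).jacobson
  have : IsLocalHom π := isLocalHom_of_le_jacobson_bot _ le_rfl
  have hfπ : f.map π = X ^ f.natDegree :=
    IsDistinguishedAt.map_eq_X_pow { mem := hcoeff _, monic := hf }
  have hgπ : IsUnit ((g.map π).coeff 0) := by simpa only [coeff_map] using hg.map π
  rw [← isCoprime_map_iff_of_monic hf g π, hfπ]
  exact (isCoprime_X_left_iff.mpr hgπ).pow_left

/-- Top-Bottom Lemma: if `f` is a monic polynomial all of whose lower coefficients lie in the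
Jacobson radical of `A`, and `g` has constant coefficient `1`, then `f` and `g` generate the
unit ideal of `A[x]`. -/
theorem stmt10 (A : Type*) [CommRing A] (f g : Polynomial A) (hf : f.Monic)
    (hcoeff : ∀ i < f.natDegree, f.coeff i ∈ (⊥ : Ideal A).jacobson)
    (hg : g.coeff 0 = 1) :
    IsCoprime f g :=
  stmt10_general A f g hf hcoeff (hg ▸ isUnit_one)
end

section
/- Let A be a commutative ring, let I ⊆ A be an ideal contained in the Jacobson radical of A, let r ≥ 2, and let σ ∈ SL_r(A). If the image of σ in SL_r(A/I) lies in the elementary subgroup E_r(A/I), then σ lies in E_r(A). -/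
open Matrix

/-- The elementary subgroup `E_r(A) ⊆ SL_r(A)`: the subgroup generated by the elementary
matrices `e_{ij}(a) = 1 + a·E_{ij}` for `i ≠ j` and `a ∈ A`. -/
def elementarySubgroup (r : ℕ) (A : Type*) [CommRing A] :
    Subgroup (SpecialLinearGroup (Fin r) A) :=
  Subgroup.closure {σ | ∃ (i j : Fin r) (a : A), i ≠ j ∧
    (σ : Matrix (Fin r) (Fin r) A) = Matrix.transvection i j a}

/-!
Elementary matrices lift along `A → A/I`, so it suffices to show that every `σ ≡ 1 mod I` is
elementary. Such a `σ` is reduced to the identity one column at a time by row operations that are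
themselves congruent to `1` modulo `I`. The pivot `σ_kk` can be made exactly `1`: for a column
`k' ≠ k` not yet treated, `σ_kk + σ_k'k ≡ 1 mod I` is a unit, so conjugating a suitable `e_{kk'}(t)`
with `t ∈ I` by `e_{k'k}(1)` corrects the pivot. When only one column is left, its pivot is the
determinant.
-/

section SpecialLinearGroup

variable {ι A B : Type*} [Fintype ι] [DecidableEq ι] [CommRing A] [CommRing B]

theorem map_transvection (f : A →+* B) {i j : ι} (hij : i ≠ j) (c : A) :
    SpecialLinearGroup.map f (SpecialLinearGroup.transvection hij c) =
      SpecialLinearGroup.transvection hij (f c) := by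
  ext p q
  simp [SpecialLinearGroup.transvection_coe, one_apply, single_apply, apply_ite f]

theorem transvection_smul {i j : ι} (hij : i ≠ j) (c : A) (v : ι → A) :
    SpecialLinearGroup.transvection hij c • v = Function.update v i (v i + c * v j) := by
  ext p
  rcases eq_or_ne p i with rfl | hp <;>
    simp [Matrix.SpecialLinearGroup.smul_def, SpecialLinearGroup.transvection_coe, add_mulVec,
      single_mulVec_eq, *]

theorem transvection_smul_single_of_ne {i j l : ι} (hij : i ≠ j) (hl : l ≠ j) (c : A) :
    SpecialLinearGroup.transvection hij c • (Pi.single l 1 : ι → A) = Pi.single l 1 := by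
  simp [transvection_smul, Pi.single_eq_of_ne' hl]

theorem smul_single_one_apply (σ : SpecialLinearGroup ι A) (i j : ι) :
    (σ • (Pi.single j 1 : ι → A)) i = σ i j := by
  simp [Matrix.SpecialLinearGroup.smul_def]

theorem eq_one_of_forall_smul_single {σ : SpecialLinearGroup ι A}
    (hσ : ∀ l, σ • (Pi.single l 1 : ι → A) = Pi.single l 1) : σ = 1 := by
  ext i j
  rw [← smul_single_one_apply, hσ, ← smul_single_one_apply, one_smul]

theorem apply_self_eq_one_of_forall_ne_smul_single {σ : SpecialLinearGroup ι A} {k : ι}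
    (hσ : ∀ l ≠ k, σ • (Pi.single l 1 : ι → A) = Pi.single l 1) : σ k k = 1 := by
  have hcol : (σ : Matrix ι ι A) = updateCol 1 k (fun i => σ i k) := by
    ext i j
    rcases eq_or_ne j k with rfl | hj
    · simp
    · rw [← smul_single_one_apply, hσ j hj, updateCol_ne hj, one_apply, Pi.single_apply]
  calc σ k k = (updateCol 1 k (fun i => σ i k)).det := by
        rw [← cramer_apply, cramer_one, Module.End.one_apply]
    _ = 1 := by rw [← hcol, Matrix.SpecialLinearGroup.det_coe]

theorem sub_one_apply_mem_of_mem_ker_map {I : Ideal A} {σ : SpecialLinearGroup ι A}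
    (hσ : σ ∈ (SpecialLinearGroup.map (Ideal.Quotient.mk I)).ker) (i j : ι) :
    σ i j - (1 : Matrix ι ι A) i j ∈ I := by
  have hij := congr_arg (fun τ : SpecialLinearGroup ι (A ⧸ I) => τ i j) hσ
  rw [← Ideal.Quotient.eq]
  simpa [one_apply, apply_ite] using hij

/-- The matrices `σ ∈ SL_ι(A)` congruent to `1` modulo `I` whose columns indexed by `S` agree with
those of the identity. The latter is encoded as fixing the basis vectors `e_l`, `l ∈ S`, so that it
visibly defines a subgroup. -/
def congruenceFixingSubgroup (I : Ideal A) (S : Set ι) : Subgroup (SpecialLinearGroup ι A) :=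
  (SpecialLinearGroup.map (Ideal.Quotient.mk I)).ker ⊓
    fixingSubgroup (SpecialLinearGroup ι A) ((fun l => (Pi.single l 1 : ι → A)) '' S)

theorem mem_congruenceFixingSubgroup {I : Ideal A} {S : Set ι} {σ : SpecialLinearGroup ι A} :
    σ ∈ congruenceFixingSubgroup I S ↔
      σ ∈ (SpecialLinearGroup.map (Ideal.Quotient.mk I)).ker ∧
        ∀ l ∈ S, σ • (Pi.single l 1 : ι → A) = Pi.single l 1 := by
  simp [congruenceFixingSubgroup, Subgroup.mem_inf, mem_fixingSubgroup_iff]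

theorem transvection_mem_congruenceFixingSubgroup {I : Ideal A} {S : Set ι} {i j : ι}
    (hij : i ≠ j) (hj : j ∉ S) {c : A} (hc : c ∈ I) :
    SpecialLinearGroup.transvection hij c ∈ congruenceFixingSubgroup I S := by
  refine mem_congruenceFixingSubgroup.2 ⟨?_, fun l hl => ?_⟩
  · rw [MonoidHom.mem_ker, map_transvection, Ideal.Quotient.eq_zero_iff_mem.2 hc,
      SpecialLinearGroup.transvection_coeff_zero]
  · exact transvection_smul_single_of_ne hij (ne_of_mem_of_not_mem hl hj) c

theorem conj_transvection_mem_congruenceFixingSubgroup {I : Ideal A} {S : Set ι} {i j : ι}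
    (hij : i ≠ j) (hj : j ∉ S) (c : A) {σ : SpecialLinearGroup ι A}
    (hσ : σ ∈ congruenceFixingSubgroup I S) :
    (SpecialLinearGroup.transvection hij c)⁻¹ * σ * SpecialLinearGroup.transvection hij c ∈
      congruenceFixingSubgroup I S := by
  obtain ⟨hker, hfix⟩ := mem_congruenceFixingSubgroup.1 hσ
  refine mem_congruenceFixingSubgroup.2
    ⟨(MonoidHom.normal_ker _).conj_mem' _ hker _, fun l hl => ?_⟩
  have hg := transvection_smul_single_of_ne hij (ne_of_mem_of_not_mem hl hj) c
  rw [mul_smul, mul_smul, hg, hfix l hl, inv_smul_eq_iff, hg]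

end SpecialLinearGroup

section Elementary

variable {r : ℕ} {A B : Type*} [CommRing A] [CommRing B]

theorem transvection_mem_elementarySubgroup {i j : Fin r} (hij : i ≠ j) (c : A) :
    SpecialLinearGroup.transvection hij c ∈ elementarySubgroup r A :=
  Subgroup.subset_closure ⟨i, j, c, hij, rfl⟩

theorem elementarySubgroup_le_map {f : A →+* B} (hf : Function.Surjective f) :
    elementarySubgroup r B ≤ (elementarySubgroup r A).map (SpecialLinearGroup.map f) := by
  refine (Subgroup.closure_le _).2 ?_
  rintro τ ⟨i, j, b, hij, hτ⟩
  obtain ⟨a, rfl⟩ := hf b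
  exact ⟨SpecialLinearGroup.transvection hij a, transvection_mem_elementarySubgroup hij a,
    (map_transvection f hij a).trans (Subtype.ext hτ.symm)⟩

variable {I : Ideal A} {S : Set (Fin r)} {k : Fin r}

theorem exists_elementary_smul_apply_eq_one {k' : Fin r} (hne : k ≠ k') (hk : k ∉ S) (hk' : k' ∉ S)
    {v : Fin r → A} (hv : 1 - v k ∈ I) (hunit : IsUnit (v k + v k')) :
    ∃ e ∈ elementarySubgroup r A ⊓ congruenceFixingSubgroup I S, (e • v) k = 1 := by
  obtain ⟨u, hu⟩ := hunit.exists_left_inv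
  let g : SpecialLinearGroup (Fin r) A := SpecialLinearGroup.transvection hne.symm 1
  let t : SpecialLinearGroup (Fin r) A := SpecialLinearGroup.transvection hne ((1 - v k) * u)
  have hg : g ∈ elementarySubgroup r A := transvection_mem_elementarySubgroup _ _
  have ht : t ∈ elementarySubgroup r A := transvection_mem_elementarySubgroup _ _
  have ht' : t ∈ congruenceFixingSubgroup I S :=
    transvection_mem_congruenceFixingSubgroup hne hk' (I.mul_mem_right u hv)
  refine ⟨g⁻¹ * t * g, Subgroup.mem_inf.2 ⟨mul_mem (mul_mem (inv_mem hg) ht) hg,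
    conj_transvection_mem_congruenceFixingSubgroup hne.symm hk 1 ht'⟩, ?_⟩
  have hgv : g • v = Function.update v k' (v k' + v k) := by
    rw [transvection_smul, one_mul]
  calc ((g⁻¹ * t * g) • v) k = (t • g • v) k := by
        rw [mul_smul, mul_smul, SpecialLinearGroup.transvection_inv, transvection_smul,
          Function.update_of_ne hne]
    _ = v k + (1 - v k) * u * (v k' + v k) := by
        rw [transvection_smul, Function.update_self, hgv, Function.update_of_ne hne,
          Function.update_self]
    _ = 1 := by linear_combination (1 - v k) * hu

theorem exists_elementary_smul_eq_piecewise_zero (hk : k ∉ S) {v : Fin r → A} (hvk : v k = 1)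
    (T : Finset (Fin r)) (hkT : k ∉ T) (hv : ∀ i ∈ T, v i ∈ I) :
    ∃ e ∈ elementarySubgroup r A ⊓ congruenceFixingSubgroup I S, e • v = T.piecewise 0 v := by
  induction T using Finset.induction_on with
  | empty => exact ⟨1, one_mem _, by simp⟩
  | insert a T ha ih =>
    obtain ⟨hka, hkT⟩ := not_or.1 (Finset.mem_insert.not.1 hkT)
    obtain ⟨haI, hTI⟩ := (Finset.forall_mem_insert _ _ _).1 hv
    obtain ⟨e, he, hev⟩ := ih hkT hTI
    have hak : a ≠ k := Ne.symm hka
    refine ⟨SpecialLinearGroup.transvection hak (-v a) * e,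
      mul_mem ⟨transvection_mem_elementarySubgroup _ _,
        transvection_mem_congruenceFixingSubgroup _ hk (I.neg_mem haI)⟩ he, ?_⟩
    rw [mul_smul, hev, transvection_smul, Finset.piecewise_insert]
    simp [ha, hkT, hvk]

theorem exists_elementary_smul_eq_single (hk : k ∉ S) {v : Fin r → A} (hvk : v k = 1)
    (hv : ∀ i ≠ k, v i ∈ I) :
    ∃ e ∈ elementarySubgroup r A ⊓ congruenceFixingSubgroup I S, e • v = Pi.single k 1 := by
  obtain ⟨e, he, hev⟩ := exists_elementary_smul_eq_piecewise_zero hk hvk (Finset.univ.erase k)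
    (Finset.notMem_erase k _) fun i hi => hv i (Finset.ne_of_mem_erase hi)
  refine ⟨e, he, hev.trans ?_⟩
  ext i
  rcases eq_or_ne i k with rfl | hi <;> simp [*]

theorem exists_elementary_mul_apply_self_eq_one (hI : I ≤ (⊥ : Ideal A).jacobson) (hk : k ∉ S)
    {σ : SpecialLinearGroup (Fin r) A} (hσ : σ ∈ congruenceFixingSubgroup I S) :
    ∃ e ∈ elementarySubgroup r A ⊓ congruenceFixingSubgroup I S, (e * σ) k k = 1 := by
  obtain ⟨hker, hfix⟩ := mem_congruenceFixingSubgroup.1 hσ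
  by_cases hS : ∃ k', k ≠ k' ∧ k' ∉ S
  · obtain ⟨k', hne, hk'⟩ := hS
    have hkk : σ k k - 1 ∈ I := by simpa using sub_one_apply_mem_of_mem_ker_map hker k k
    have hk'k : σ k' k ∈ I := by
      simpa [one_apply_ne hne.symm] using sub_one_apply_mem_of_mem_ker_map hker k' k
    have hunit : IsUnit (σ k k + σ k' k) := by
      convert Ideal.mem_jacobson_bot.1 (hI (I.add_mem hkk hk'k)) 1 using 1
      ring
    simp only [← smul_single_one_apply] at hkk hunit
    obtain ⟨e, he, hek⟩ := exists_elementary_smul_apply_eq_one hne hk hk'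
      (by rwa [← I.neg_mem_iff, neg_sub]) hunit
    exact ⟨e, he, by rw [← smul_single_one_apply, mul_smul, hek]⟩
  · push Not at hS
    refine ⟨1, one_mem _, ?_⟩
    rw [one_mul]
    exact apply_self_eq_one_of_forall_ne_smul_single fun l hl => hfix l (hS l hl.symm)

theorem exists_elementary_mul_mem_congruenceFixingSubgroup_insert
    (hI : I ≤ (⊥ : Ideal A).jacobson) (hk : k ∉ S) {σ : SpecialLinearGroup (Fin r) A}
    (hσ : σ ∈ congruenceFixingSubgroup I S) :
    ∃ e ∈ elementarySubgroup r A, e * σ ∈ congruenceFixingSubgroup I (insert k S) := by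
  obtain ⟨p, ⟨hpE, hpS⟩, hpivot⟩ := exists_elementary_mul_apply_self_eq_one hI hk hσ
  have hpσ := mem_congruenceFixingSubgroup.1 (mul_mem hpS hσ)
  have hcol : ∀ i ≠ k, (p * σ) i k ∈ I := fun i hi => by
    simpa only [one_apply_ne hi, sub_zero] using sub_one_apply_mem_of_mem_ker_map hpσ.1 i k
  simp only [← smul_single_one_apply] at hpivot hcol
  obtain ⟨c, ⟨hcE, hcS⟩, hclear⟩ := exists_elementary_smul_eq_single hk hpivot hcol
  obtain ⟨hker, hfix⟩ := mem_congruenceFixingSubgroup.1 (mul_mem hcS (mul_mem hpS hσ))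
  refine ⟨c * p, mul_mem hcE hpE, mem_congruenceFixingSubgroup.2 ?_⟩
  rw [mul_assoc]
  exact ⟨hker, Set.forall_mem_insert.2 ⟨by rw [mul_smul, hclear], hfix⟩⟩

theorem congruenceFixingSubgroup_compl_le_elementarySubgroup (hI : I ≤ (⊥ : Ideal A).jacobson)
    (T : Finset (Fin r)) :
    congruenceFixingSubgroup I (↑(Tᶜ) : Set (Fin r)) ≤ elementarySubgroup r A := by
  intro σ hσ
  induction T using Finset.induction_on generalizing σ with
  | empty =>
    have hfix := (mem_congruenceFixingSubgroup.1 hσ).2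
    rw [eq_one_of_forall_smul_single fun l => hfix l (by simp)]
    exact one_mem _
  | insert k T hk ih =>
    obtain ⟨e, he, heσ⟩ :=
      exists_elementary_mul_mem_congruenceFixingSubgroup_insert hI (k := k) (by simp) hσ
    rw [← Finset.coe_insert, Finset.insert_compl_insert hk] at heσ
    exact (Subgroup.mul_mem_cancel_left _ he).1 (ih heσ)

theorem ker_map_le_elementarySubgroup (hI : I ≤ (⊥ : Ideal A).jacobson) :
    (SpecialLinearGroup.map (Ideal.Quotient.mk I)).ker ≤ elementarySubgroup r A := fun σ hσ =>
  congruenceFixingSubgroup_compl_le_elementarySubgroup hI Finset.univ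
    (mem_congruenceFixingSubgroup.2 ⟨hσ, by simp⟩)

end Elementary

/-- If `I` is an ideal contained in the Jacobson radical of `A` and `σ ∈ SL_r(A)` becomes
elementary modulo `I`, then `σ` is elementary. -/
theorem stmt14 (A : Type*) [CommRing A] (I : Ideal A) (hI : I ≤ (⊥ : Ideal A).jacobson)
    (r : ℕ) (hr : 2 ≤ r) (σ : SpecialLinearGroup (Fin r) A)
    (h : SpecialLinearGroup.map (Ideal.Quotient.mk I) σ ∈ elementarySubgroup r (A ⧸ I)) :
    σ ∈ elementarySubgroup r A := by
  have hlift := elementarySubgroup_le_map Ideal.Quotient.mk_surjective h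
  rwa [← Subgroup.mem_comap, Subgroup.comap_map_eq_self (ker_map_le_elementarySubgroup hI)]
    at hlift
end
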